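/- arXiv:1804.03844 — 2 statements merged into one kernel-verified Lean document; each statement's English description precedes it below -/
import Mathlib

section
/- For the Kepler Hamiltonian in Levi-Civita coordinates, the tangential Gauss–Kronecker curvature determinant equals 512/X²⁴: for (w₁, w₂, z₁, z₂) ∈ ℝ⁴ with X := w₁² + w₂² + z₁² + z₂² > 0, let u := (w₁, w₂, z₁, z₂)ᵀ, let M be the 4×4 matrix M := (2/X³)·I₄ − (12/X⁴)·u uᵀ (the Hessian of H_K := −1/(2X²)), and let G_tan be the 4×3 matrix (2/X³)·[[−w₂, −z₁, −z₂], [w₁, −z₂, z₁], [z₂, w₁, −w₂], [−z₁, w₂, w₁]] (the tangential frame obtained by quaternion multiplication of the gradient of H_K by i, j, k). Then det(G_tanᵀ M G_tan) = 512/X²⁴; in particular this curvature is positive for all (w₁, w₂, z₁, z₂) ≠ 0. -/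
open Matrix

/-- For the Kepler Hamiltonian in Levi-Civita coordinates, the tangential
Gauss–Kronecker curvature determinant equals 512 / X²⁴, and in particular is
positive. -/
theorem Kepler_tangential_curvature
    (w₁ w₂ z₁ z₂ : ℝ) (X : ℝ) (hX : X = w₁ ^ 2 + w₂ ^ 2 + z₁ ^ 2 + z₂ ^ 2)
    (hXpos : 0 < X)
    (u : Fin 4 → ℝ) (hu : u = ![w₁, w₂, z₁, z₂])
    (M : Matrix (Fin 4) (Fin 4) ℝ)
    (hM : M = (2 / X ^ 3) • (1 : Matrix (Fin 4) (Fin 4) ℝ) -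
        (12 / X ^ 4) • Matrix.of (fun i j => u i * u j))
    (Gtan : Matrix (Fin 4) (Fin 3) ℝ)
    (hGtan : Gtan = (2 / X ^ 3) • !![-w₂, -z₁, -z₂;
                                      w₁, -z₂, z₁;
                                      z₂, w₁, -w₂;
                                      -z₁, w₂, w₁]) :
    (Gtanᵀ * M * Gtan).det = 512 / X ^ 24 ∧ 0 < (Gtanᵀ * M * Gtan).det := by
  have key : Gtanᵀ * M * Gtan = (8 / X ^ 8) • (1 : Matrix (Fin 3) (Fin 3) ℝ) := by
    have hc : (8 / X ^ 8 : ℝ) = (2 / X ^ 3) * (2 / X ^ 3) * (2 / X ^ 3) *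
        (w₁ ^ 2 + w₂ ^ 2 + z₁ ^ 2 + z₂ ^ 2) := by
      rw [← hX]
      field_simp
      norm_num
    rw [hc, hGtan, hM, hu]
    generalize 2 / X ^ 3 = a
    generalize 12 / X ^ 4 = b
    ext i j
    fin_cases i <;> fin_cases j <;>
      simp [Matrix.mul_apply, Fin.sum_univ_four, Matrix.one_apply] <;> ring
  have hdet : (Gtanᵀ * M * Gtan).det = 512 / X ^ 24 := by
    rw [key, Matrix.det_smul, Matrix.det_one, Fintype.card_fin, div_pow]
    ring
  refine ⟨hdet, ?_⟩
  rw [hdet]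
  positivity
end

section
/- The tangential curvature of the planar rotating Kepler Hamiltonian is positive on the bounded component at low energies: for w = (w₁, w₂), z = (z₁, z₂) ∈ ℝ², set X := w₁² + w₂² + z₁² + z₂² and L := 2(w₁z₂ − w₂z₁), and suppose 0 < X < 1 and −1/(2X²) + L ≤ −3/2. Then the curvature expression C_Rt := (512/X²⁴)·(X − 1)·(X + 1)·(X² + X + 1)·(X² − X + 1)·(−6L²X⁴ + LX⁸ − LX² + 7X⁶ − 1)·(X⁶ + 2LX² + 1)² is strictly positive. -/
/-- The tangential curvature of the planar rotating Kepler Hamiltonian is positive on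
the bounded component at low energies. -/
theorem rotating_Kepler_tangential_curvature_pos
    (w₁ w₂ z₁ z₂ : ℝ) (X L : ℝ)
    (hX : X = w₁ ^ 2 + w₂ ^ 2 + z₁ ^ 2 + z₂ ^ 2)
    (hL : L = 2 * (w₁ * z₂ - w₂ * z₁))
    (hX0 : 0 < X) (hX1 : X < 1)
    (hc : -1 / (2 * X ^ 2) + L ≤ -3 / 2) :
    0 < (512 / X ^ 24) * (X - 1) * (X + 1) * (X ^ 2 + X + 1) * (X ^ 2 - X + 1) *
        (-6 * L ^ 2 * X ^ 4 + L * X ^ 8 - L * X ^ 2 + 7 * X ^ 6 - 1) *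
        (X ^ 6 + 2 * L * X ^ 2 + 1) ^ 2 := by
  have hLX : -X ≤ L := by
    rw [hX, hL]
    nlinarith [sq_nonneg (w₁ + z₂), sq_nonneg (w₂ - z₁)]
  have hX2 : 0 < X ^ 2 := by positivity
  have hX3 : X ^ 3 < 1 := pow_lt_one₀ hX0.le hX1 (by norm_num)
  have hG : 0 < X ^ 6 + 2 * L * X ^ 2 + 1 := by
    have h1 : 0 < (1 - X ^ 3) ^ 2 := by
      have : 0 < 1 - X ^ 3 := by linarith
      positivity
    nlinarith [mul_le_mul_of_nonneg_right hLX hX2.le]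
  have hu : L * X ^ 2 ≤ (1 - 3 * X ^ 2) / 2 := by
    have h1 := mul_le_mul_of_nonneg_right hc hX2.le
    have h2 : (-1 / (2 * X ^ 2) + L) * X ^ 2 = -1 / 2 + L * X ^ 2 := by
      field_simp
    rw [h2] at h1
    linarith
  have hy1 : X ^ 2 < 1 := pow_lt_one₀ hX0.le hX1 (by norm_num)
  have hF : -6 * L ^ 2 * X ^ 4 + L * X ^ 8 - L * X ^ 2 + 7 * X ^ 6 - 1 < 0 := by
    have key : ∀ u y : ℝ, 0 < y → y < 1 → u ≤ (1 - 3 * y) / 2 →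
        -6 * u ^ 2 - u * (1 - y ^ 3) + 7 * y ^ 3 - 1 < 0 := by
      intro u y h0 h1 h2
      have ht0 : 0 < y ^ 3 := by positivity
      rcases le_total y (2 / 5) with h | h
      · have ht : y ^ 3 ≤ (2 / 5) ^ 3 := pow_le_pow_left₀ h0.le h 3
        norm_num at ht
        nlinarith [sq_nonneg (12 * u + (1 - y ^ 3))]
      · have h3 : 0 ≤ ((1 - 3 * y) / 2 - u) *
            (-6 * ((1 - 3 * y) / 2 + u) - (1 - y ^ 3)) :=
          mul_nonneg (by linarith) (by linarith)
        have h4 : 0 < (1 - y) ^ 3 * (2 - y) :=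
          mul_pos (pow_pos (by linarith) 3) (by linarith)
        nlinarith
    have := key (L * X ^ 2) (X ^ 2) hX2 hy1 hu
    nlinarith
  have hP : 0 < (512 / X ^ 24) * (1 - X) * (X + 1) * (X ^ 2 + X + 1) * (X ^ 2 - X + 1) *
      (-(-6 * L ^ 2 * X ^ 4 + L * X ^ 8 - L * X ^ 2 + 7 * X ^ 6 - 1)) *
      (X ^ 6 + 2 * L * X ^ 2 + 1) ^ 2 := by
    have a1 : 0 < 1 - X := by linarith
    have a2 : 0 < X ^ 2 - X + 1 := by nlinarith
    have a3 := neg_pos.mpr hF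
    exact mul_pos (mul_pos (mul_pos (mul_pos (mul_pos (mul_pos (by positivity) a1)
      (by positivity)) (by positivity)) a2) a3) (pow_pos hG 2)
  refine lt_of_lt_of_eq hP ?_
  ring
end
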